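/- arXiv:1911.09944 — 2 statements merged into one kernel-verified Lean document; each statement's English description precedes it below -/
import Mathlib

section
/- For all integers n ≥ 1 and q ≥ 2, there exists a single-insertion-covering code C ⊆ Σ_q^n with |C| ≤ 7·q^{n+1}/((n+1)(q−1)+1); equivalently, K_I^q(n,1) ≤ 7 q^{n+1}/((n+1)(q−1)+1). -/
/-!
A covering code of length `m + 1 + s` is obtained from a random set `R` of words of length `m`
(each word taken with probability `p`) and a covering code `D` of length `s`. A word `u ++ v` with
`|u| = m + 1` and `|v| = s + 1` is covered by `R × Σ^(s+1)` if some single deletion of `u` lies in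
`R`, and by `{u} × D` otherwise. A word with `r` runs has `r` single deletions, so it is missed with
probability `(1 - p) ^ r`, and prepending a symbol creates a new run for all but one choice of the
symbol. The missed words `u` hence number `q (1 - p) (1 + (q - 1) (1 - p)) ^ m` on average, which is
at most `q ^ (m + 1) * exp (-p L m)`, where `L m` is the mean number of runs. With `p = 2 / L m` the
densities satisfy `δ_C ≤ 2 / L m + exp (-2) δ_D`, and halving the length at each step preserves the
bound `δ ≤ 7 / L`.
-/

open Finset

section RandomSubset

variable {X R : Type*} [CommRing R]

/-- The probability that a random subset of `S`, which contains each element independently with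
probability `p`, equals `C`; only meaningful for `C ⊆ S`. -/
def bernoulliWeight (p : R) (S C : Finset X) : R := p ^ #C * (1 - p) ^ (#S - #C)

lemma sum_bernoulliWeight (p : R) (S : Finset X) :
    ∑ C ∈ S.powerset, bernoulliWeight p S C = 1 := by
  simp only [bernoulliWeight, sum_pow_mul_eq_add_pow, add_sub_cancel, one_pow]

lemma sum_bernoulliWeight_disjoint [DecidableEq X] (p : R) (S T : Finset X) :
    ∑ C ∈ S.powerset with Disjoint T C, bernoulliWeight p S C = (1 - p) ^ #(S ∩ T) := by
  have avoiding : {C ∈ S.powerset | Disjoint T C} = (S \ T).powerset := by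
    ext C
    simp only [mem_filter, mem_powerset, subset_sdiff, disjoint_comm]
  have weight_eq : ∀ C ∈ (S \ T).powerset,
      bernoulliWeight p S C = (1 - p) ^ #(S ∩ T) * bernoulliWeight p (S \ T) C := by
    intro C hC
    have hcard : #S - #C = #(S ∩ T) + (#(S \ T) - #C) := by
      have := card_le_card (mem_powerset.1 hC)
      have := card_inter_add_card_sdiff S T
      omega
    rw [bernoulliWeight, bernoulliWeight, hcard, pow_add]
    ring
  rw [avoiding, sum_congr rfl weight_eq, ← mul_sum, sum_bernoulliWeight, mul_one]

lemma sum_bernoulliWeight_mem [DecidableEq X] (p : R) {S : Finset X} {x : X} (hx : x ∈ S) :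
    ∑ C ∈ S.powerset with x ∈ C, bernoulliWeight p S C = p := by
  have total := sum_filter_add_sum_filter_not S.powerset (x ∈ ·) (bernoulliWeight p S)
  have avoiding := sum_bernoulliWeight_disjoint p S {x}
  simp only [disjoint_singleton_left, inter_singleton_of_mem hx, card_singleton, pow_one]
    at avoiding
  rw [avoiding, sum_bernoulliWeight] at total
  linear_combination total

lemma sum_bernoulliWeight_mul_card (p : R) (S : Finset X) :
    ∑ C ∈ S.powerset, bernoulliWeight p S C * #C = p * #S := by
  classical
  calc ∑ C ∈ S.powerset, bernoulliWeight p S C * #C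
      = ∑ C ∈ S.powerset, ∑ x ∈ S, if x ∈ C then bernoulliWeight p S C else 0 := by
        refine sum_congr rfl fun C hC ↦ ?_
        rw [← sum_filter, filter_mem_eq_inter, inter_eq_right.2 (mem_powerset.1 hC), sum_const,
          nsmul_eq_mul, mul_comm]
    _ = ∑ x ∈ S, ∑ C ∈ S.powerset with x ∈ C, bernoulliWeight p S C := by
        rw [sum_comm]
        simp only [sum_filter]
    _ = p * #S := by
        rw [sum_congr rfl fun x hx ↦ sum_bernoulliWeight_mem p hx, sum_const, nsmul_eq_mul,
          mul_comm]

variable [DecidableEq X] {ι : Type*} (B : ι → Finset X) (V : Finset ι) (S : Finset X)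

lemma sum_bernoulliWeight_mul_card_disjoint (p : R) :
    ∑ C ∈ S.powerset, bernoulliWeight p S C * #{u ∈ V | Disjoint (B u) C} =
      ∑ u ∈ V, (1 - p) ^ #(S ∩ B u) := by
  simp only [← sum_bernoulliWeight_disjoint, sum_filter, card_filter, Nat.cast_sum, mul_sum]
  rw [sum_comm]
  simp only [Nat.cast_ite, Nat.cast_one, Nat.cast_zero, mul_ite, mul_one, mul_zero]

lemma exists_subset_card_add_card_disjoint_le {p : ℝ} (hp0 : 0 ≤ p) (hp1 : p ≤ 1) (a b : ℝ) :
    ∃ C ⊆ S, a * #C + b * #{u ∈ V | Disjoint (B u) C} ≤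
      a * (p * #S) + b * ∑ u ∈ V, (1 - p) ^ #(S ∩ B u) := by
  set cost : Finset X → ℝ := fun C ↦ a * #C + b * #{u ∈ V | Disjoint (B u) C}
  obtain ⟨C, hCS, hmin⟩ := exists_min_image S.powerset cost (powerset_nonempty S)
  refine ⟨C, mem_powerset.1 hCS, ?_⟩
  have weight_nonneg (T : Finset X) : 0 ≤ bernoulliWeight p S T :=
    mul_nonneg (pow_nonneg hp0 _) (pow_nonneg (sub_nonneg.2 hp1) _)
  calc cost C = ∑ T ∈ S.powerset, bernoulliWeight p S T * cost C := by
        rw [← sum_mul, sum_bernoulliWeight, one_mul]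
    _ ≤ ∑ T ∈ S.powerset, bernoulliWeight p S T * cost T :=
        sum_le_sum fun T hT ↦ mul_le_mul_of_nonneg_left (hmin T hT) (weight_nonneg T)
    _ = a * (p * #S) + b * ∑ u ∈ V, (1 - p) ^ #(S ∩ B u) := by
        rw [← sum_bernoulliWeight_mul_card, ← sum_bernoulliWeight_mul_card_disjoint, mul_sum,
          mul_sum, ← sum_add_distrib]
        exact sum_congr rfl fun T _ ↦ by ring

end RandomSubset

section Words

variable (α : Type*) [Fintype α]

/-- The words of length `n` over the alphabet `α`, i.e. `Σ_q^n`. -/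
def wordsOfLength (n : ℕ) : Finset (List α) :=
  (univ : Finset (Fin n → α)).map ⟨List.ofFn, List.ofFn_injective⟩

variable {α}

@[simp]
lemma mem_wordsOfLength {n : ℕ} {w : List α} : w ∈ wordsOfLength α n ↔ w.length = n := by
  constructor
  · intro hw
    obtain ⟨f, -, rfl⟩ := mem_map.1 hw
    exact List.length_ofFn
  · rintro rfl
    exact mem_map.2 ⟨w.get, mem_univ _, List.ofFn_get w⟩

variable (α)

@[simp]
lemma card_wordsOfLength (n : ℕ) : #(wordsOfLength α n) = Fintype.card α ^ n := by
  rw [wordsOfLength, card_map, card_univ, Fintype.card_fun, Fintype.card_fin]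

@[simp]
lemma wordsOfLength_zero : wordsOfLength α 0 = {[]} := by
  ext w
  rw [mem_wordsOfLength, List.length_eq_zero_iff, mem_singleton]

lemma sum_wordsOfLength_succ {M : Type*} [AddCommMonoid M] (n : ℕ) (f : List α → M) :
    ∑ w ∈ wordsOfLength α (n + 1), f w = ∑ w ∈ wordsOfLength α n, ∑ x, f (x :: w) := by
  simp only [wordsOfLength, sum_map, Function.Embedding.coeFn_mk]
  rw [← (Fin.consEquiv fun _ ↦ α).sum_comp, Fintype.sum_prod_type_right]
  exact sum_congr rfl fun v _ ↦ sum_congr rfl fun x _ ↦ congrArg f (List.ofFn_cons x v)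

end Words

section SingleDeletions

variable {α : Type*} [DecidableEq α]

/-- The words obtained from `w` by deleting exactly one symbol. -/
def singleDeletions (w : List α) : Finset (List α) := (range w.length).image w.eraseIdx

lemma sublist_of_mem_singleDeletions {c w : List α} (h : c ∈ singleDeletions w) :
    c.Sublist w := by
  obtain ⟨i, -, rfl⟩ := mem_image.1 h
  exact w.eraseIdx_sublist i

lemma length_of_mem_singleDeletions {c w : List α} (h : c ∈ singleDeletions w) :
    c.length + 1 = w.length := by
  obtain ⟨i, hi, rfl⟩ := mem_image.1 h
  exact List.length_eraseIdx_add_one (mem_range.1 hi)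

lemma singleDeletions_nil : singleDeletions ([] : List α) = ∅ := rfl

lemma singleDeletions_cons (x : α) (w : List α) :
    singleDeletions (x :: w) = insert w ((singleDeletions w).image (List.cons x)) := by
  rw [singleDeletions, List.length_cons, range_add_one', image_insert, map_eq_image,
    image_image, singleDeletions, image_image]
  rfl

lemma card_singleDeletions_cons_cons (x y : α) (w : List α) :
    #(singleDeletions (x :: y :: w)) = #(singleDeletions (y :: w)) + if x = y then 0 else 1 := by
  rw [singleDeletions_cons x]
  split_ifs with hxy
  · subst hxy
    have hmem : x :: w ∈ (singleDeletions (x :: w)).image (List.cons x) := by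
      refine mem_image_of_mem _ ?_
      rw [singleDeletions_cons]
      exact mem_insert_self _ _
    rw [insert_eq_of_mem hmem, card_image_of_injective _ List.cons_injective, add_zero]
  · have hnotMem : y :: w ∉ (singleDeletions (y :: w)).image (List.cons x) := by
      simp [hxy]
    rw [card_insert_of_notMem hnotMem, card_image_of_injective _ List.cons_injective]

variable [Fintype α] {R : Type*} [CommRing R]

lemma sum_pow_card_singleDeletions_cons (t : R) {w : List α} (hw : w ≠ []) :
    ∑ x, t ^ #(singleDeletions (x :: w)) =
      t ^ #(singleDeletions w) * (1 + (Fintype.card α - 1) * t) := by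
  obtain ⟨y, v, rfl⟩ := List.exists_cons_of_ne_nil hw
  have split_pow (x : α) :
      t ^ (if x = y then 0 else 1) = t + if x = y then 1 - t else 0 := by
    split_ifs <;> ring
  simp only [card_singleDeletions_cons_cons, pow_add, ← mul_sum, split_pow, sum_add_distrib,
    sum_const, card_univ, nsmul_eq_mul, sum_ite_eq', mem_univ, if_true]
  ring

lemma sum_pow_card_singleDeletions (t : R) (n : ℕ) :
    ∑ w ∈ wordsOfLength α (n + 1), t ^ #(singleDeletions w) =
      Fintype.card α * t * (1 + (Fintype.card α - 1) * t) ^ n := by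
  induction n with
  | zero => simp [sum_wordsOfLength_succ, singleDeletions_cons, singleDeletions_nil]
  | succ n ih =>
    have hne : ∀ w ∈ wordsOfLength α (n + 1), w ≠ [] := fun w hw ↦
      List.ne_nil_of_length_eq_add_one (mem_wordsOfLength.1 hw)
    rw [sum_wordsOfLength_succ, sum_congr rfl fun w hw ↦
      sum_pow_card_singleDeletions_cons t (hne w hw), ← sum_mul, ih]
    ring

end SingleDeletions

section CoveringCodes

variable {α : Type*}

/-- `C` is a single-insertion-covering code of length `n`: its words have length `n`, and every word
of length `n + 1` contains one of them as a subsequence. -/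
structure IsSingleInsertionCovering (n : ℕ) (C : Finset (List α)) : Prop where
  length_eq : ∀ c ∈ C, c.length = n
  exists_sublist : ∀ y : List α, y.length = n + 1 → ∃ c ∈ C, c.Sublist y

variable [Fintype α]

lemma isSingleInsertionCovering_wordsOfLength (n : ℕ) :
    IsSingleInsertionCovering n (wordsOfLength α n) where
  length_eq _ := mem_wordsOfLength.1
  exists_sublist y hy := ⟨y.tail, by simp [hy], y.tail_sublist⟩

section Extension

variable [DecidableEq α]

/-- The words of length `m + 1` none of whose single deletions lies in `C`: those that `C` fails to
cover. -/
def uncoveredWords (m : ℕ) (C : Finset (List α)) : Finset (List α) :=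
  {u ∈ wordsOfLength α (m + 1) | Disjoint (singleDeletions u) C}

/-- The code of length `m + 1 + s` made from words `C` of length `m` and a covering code `D` of
length `s`: a word of `C` is completed by all words of length `s + 1`, and a word of length `m + 1`
that `C` fails to cover is completed by the words of `D`. -/
def extendedCode (m s : ℕ) (C D : Finset (List α)) : Finset (List α) :=
  image₂ (· ++ ·) C (wordsOfLength α (s + 1)) ∪ image₂ (· ++ ·) (uncoveredWords m C) D

lemma isSingleInsertionCovering_extendedCode {m s : ℕ} {C D : Finset (List α)}
    (hC : C ⊆ wordsOfLength α m) (hD : IsSingleInsertionCovering s D) :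
    IsSingleInsertionCovering (m + 1 + s) (extendedCode m s C D) where
  length_eq w hw := by
    rcases mem_union.1 hw with h | h
    · obtain ⟨c, hc, v, hv, rfl⟩ := mem_image₂.1 h
      rw [List.length_append, mem_wordsOfLength.1 (hC hc), mem_wordsOfLength.1 hv]
      ring
    · obtain ⟨u, hu, d, hd, rfl⟩ := mem_image₂.1 h
      rw [List.length_append, mem_wordsOfLength.1 (mem_filter.1 hu).1, hD.length_eq d hd]
  exists_sublist y hy := by
    obtain ⟨u, v, rfl, hu, hv⟩ : ∃ u v, y = u ++ v ∧ u.length = m + 1 ∧ v.length = s + 1 :=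
      ⟨y.take (m + 1), y.drop (m + 1), (List.take_append_drop _ y).symm,
        by rw [List.length_take]; omega, by rw [List.length_drop]; omega⟩
    by_cases hdisj : Disjoint (singleDeletions u) C
    · obtain ⟨d, hd, hdv⟩ := hD.exists_sublist v hv
      have huncovered : u ∈ uncoveredWords m C :=
        mem_filter.2 ⟨mem_wordsOfLength.2 hu, hdisj⟩
      exact ⟨u ++ d, mem_union_right _ (mem_image₂_of_mem huncovered hd),
        (List.Sublist.refl u).append hdv⟩
    · obtain ⟨c, hcu, hcC⟩ := not_disjoint_iff.1 hdisj
      exact ⟨c ++ v, mem_union_left _ (mem_image₂_of_mem hcC (mem_wordsOfLength.2 hv)),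
        (sublist_of_mem_singleDeletions hcu).append (List.Sublist.refl v)⟩

lemma card_extendedCode_le (m s : ℕ) (C D : Finset (List α)) :
    #(extendedCode m s C D) ≤ Fintype.card α ^ (s + 1) * #C + #D * #(uncoveredWords m C) := by
  refine (card_union_le _ _).trans (add_le_add ?_ ?_)
  · rw [← card_wordsOfLength, mul_comm]
    exact card_image₂_le ..
  · rw [mul_comm]
    exact card_image₂_le ..

end Extension

lemma IsSingleInsertionCovering.exists_extension {s : ℕ} {D : Finset (List α)}
    (hD : IsSingleInsertionCovering s D) (m : ℕ) {p : ℝ} (hp0 : 0 ≤ p) (hp1 : p ≤ 1) :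
    ∃ C : Finset (List α), IsSingleInsertionCovering (m + 1 + s) C ∧
      (#C : ℝ) ≤ p * (Fintype.card α : ℝ) ^ (m + 1 + s) +
        #D * (Fintype.card α * (1 - p) * (1 + (Fintype.card α - 1) * (1 - p)) ^ m) := by
  classical
  obtain ⟨C, hC, hcost⟩ := exists_subset_card_add_card_disjoint_le singleDeletions
    (wordsOfLength α (m + 1)) (wordsOfLength α m) hp0 hp1 ((Fintype.card α : ℝ) ^ (s + 1)) #D
  have inter_eq : ∀ u ∈ wordsOfLength α (m + 1),
      wordsOfLength α m ∩ singleDeletions u = singleDeletions u := fun u hu ↦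
    inter_eq_right.2 fun c hc ↦ mem_wordsOfLength.2 <| Nat.succ_injective <|
      (length_of_mem_singleDeletions hc).trans (mem_wordsOfLength.1 hu)
  rw [sum_congr rfl fun u hu ↦ by rw [inter_eq u hu], sum_pow_card_singleDeletions,
    card_wordsOfLength] at hcost
  refine ⟨extendedCode m s C D, isSingleInsertionCovering_extendedCode hC hD, ?_⟩
  calc (#(extendedCode m s C D) : ℝ)
      ≤ (Fintype.card α : ℝ) ^ (s + 1) * #C + #D * #(uncoveredWords m C) := by
        exact_mod_cast card_extendedCode_le m s C D
    _ ≤ _ := hcost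
    _ = _ := by push_cast; ring

end CoveringCodes

section MeanDeletions

variable (α : Type*) [Fintype α]

/-- The average number of single deletions of a word of length `n + 1`, which is the size
`(n + 1) (q - 1) + 1` of an insertion ball divided by `q`. -/
noncomputable def meanDeletions (n : ℕ) : ℝ :=
  n * ((Fintype.card α - 1) / Fintype.card α) + 1

variable [Nonempty α]

lemma card_sub_one_div_card_mem_Icc :
    ((Fintype.card α : ℝ) - 1) / Fintype.card α ∈ Set.Icc 0 1 := by
  have hq : (1 : ℝ) ≤ Fintype.card α := by exact_mod_cast Fintype.card_pos (α := α)
  exact ⟨div_nonneg (by linarith) (by linarith), (div_le_one (by linarith)).2 (by linarith)⟩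

lemma card_mul_meanDeletions (n : ℕ) :
    (Fintype.card α : ℝ) * meanDeletions α n = (n + 1) * ((Fintype.card α : ℝ) - 1) + 1 := by
  rw [meanDeletions]
  field_simp
  ring

lemma meanDeletions_mono : Monotone (meanDeletions α) := by
  intro m n hmn
  have := (card_sub_one_div_card_mem_Icc α).1
  unfold meanDeletions
  gcongr

lemma meanDeletions_pos (n : ℕ) : 0 < meanDeletions α n := by
  have := (card_sub_one_div_card_mem_Icc α).1
  unfold meanDeletions
  positivity

lemma meanDeletions_add_one_add_le (m s : ℕ) :
    meanDeletions α (m + 1 + s) ≤ meanDeletions α m + meanDeletions α s := by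
  have := (card_sub_one_div_card_mem_Icc α).2
  unfold meanDeletions
  push_cast
  linarith

lemma meanDeletions_succ_le_two_mul (n : ℕ) :
    meanDeletions α (n + 1) ≤ 2 * meanDeletions α n := by
  have h := meanDeletions_add_one_add_le α n 0
  have h0 := meanDeletions_mono α n.zero_le
  rw [add_zero] at h
  linarith

end MeanDeletions

lemma two_div_add_one_div_le_seven_div_add {x y : ℝ} (hy : 0 < y) (hyx : y ≤ x)
    (hxy : x ≤ 2 * y) : 2 / x + 1 / y ≤ 7 / (x + y) := by
  have hx : 0 < x := hy.trans_le hyx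
  rw [div_add_div _ _ hx.ne' hy.ne', div_le_div_iff₀ (by positivity) (by positivity)]
  nlinarith [mul_le_mul_of_nonneg_left hyx hy.le, mul_le_mul_of_nonneg_left hxy hx.le]

lemma exp_neg_two_le_one_div_seven : Real.exp (-2) ≤ 1 / 7 := by
  rw [Real.exp_neg, one_div]
  refine inv_anti₀ (by norm_num) ?_
  calc (7 : ℝ) ≤ 2.7 ^ 2 := by norm_num
    _ ≤ Real.exp 1 ^ 2 := by gcongr; linarith [Real.exp_one_gt_d9]
    _ = Real.exp 2 := by rw [← Real.exp_nat_mul]; norm_num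

section Recursion

variable {α : Type*} [Fintype α] [Nonempty α]

lemma card_mul_one_sub_mul_pow_le_exp (m : ℕ) {p : ℝ} (hp1 : p ≤ 1) :
    (Fintype.card α : ℝ) * (1 - p) * (1 + (Fintype.card α - 1) * (1 - p)) ^ m ≤
      (Fintype.card α : ℝ) ^ (m + 1) * Real.exp (-(p * meanDeletions α m)) := by
  set q := (Fintype.card α : ℝ) with hq
  set r : ℝ := (q - 1) / q with hr
  obtain ⟨hr0, hr1⟩ : r ∈ Set.Icc 0 1 := card_sub_one_div_card_mem_Icc α
  have hq0 : q ≠ 0 := Nat.cast_ne_zero.2 Fintype.card_ne_zero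
  have hbase : 1 + (q - 1) * (1 - p) = q * (1 - p * r) := by
    rw [hr]; field_simp; ring
  have hbase_nonneg : 0 ≤ 1 - p * r := sub_nonneg.2 (mul_le_one₀ hp1 hr0 hr1)
  calc q * (1 - p) * (1 + (q - 1) * (1 - p)) ^ m
      = q ^ (m + 1) * ((1 - p) * (1 - p * r) ^ m) := by rw [hbase, mul_pow]; ring
    _ ≤ q ^ (m + 1) * (Real.exp (-p) * Real.exp (-(p * r)) ^ m) := by
        gcongr
        · exact Real.one_sub_le_exp_neg p
        · exact Real.one_sub_le_exp_neg (p * r)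
    _ = q ^ (m + 1) * Real.exp (-(p * meanDeletions α m)) := by
        rw [← Real.exp_nat_mul, ← Real.exp_add, meanDeletions, ← hq, ← hr]
        ring_nf

lemma IsSingleInsertionCovering.exists_extension_card_le {m s : ℕ} {D : Finset (List α)}
    (hD : IsSingleInsertionCovering s D) (hsm : s ≤ m) (hms : m ≤ s + 1)
    (hm : 2 ≤ meanDeletions α m)
    (hDcard : (#D : ℝ) ≤ 7 * (Fintype.card α : ℝ) ^ s / meanDeletions α s) :
    ∃ C : Finset (List α), IsSingleInsertionCovering (m + 1 + s) C ∧
      (#C : ℝ) ≤ 7 * (Fintype.card α : ℝ) ^ (m + 1 + s) / meanDeletions α (m + 1 + s) := by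
  have hm0 := meanDeletions_pos α m
  have hs0 := meanDeletions_pos α s
  set p := 2 / meanDeletions α m
  have hp1 : p ≤ 1 := (div_le_one hm0).2 hm
  obtain ⟨C, hC, hCcard⟩ := hD.exists_extension m (by positivity : 0 ≤ p) hp1
  refine ⟨C, hC, hCcard.trans ?_⟩
  have missed_le : Fintype.card α * (1 - p) * (1 + (Fintype.card α - 1) * (1 - p)) ^ m ≤
      (Fintype.card α : ℝ) ^ (m + 1) * (1 / 7) := by
    refine (card_mul_one_sub_mul_pow_le_exp m hp1).trans ?_
    rw [div_mul_cancel₀ _ hm0.ne']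
    gcongr
    exact exp_neg_two_le_one_div_seven
  have rate_le : p + 1 / meanDeletions α s ≤ 7 / meanDeletions α (m + 1 + s) :=
    (two_div_add_one_div_le_seven_div_add hs0 (meanDeletions_mono α hsm)
      ((meanDeletions_mono α hms).trans (meanDeletions_succ_le_two_mul α s))).trans
      (div_le_div_of_nonneg_left (by norm_num) (meanDeletions_pos α _)
        (meanDeletions_add_one_add_le α m s))
  calc
    _ ≤ p * (Fintype.card α : ℝ) ^ (m + 1 + s) +
          #D * ((Fintype.card α : ℝ) ^ (m + 1) * (1 / 7)) := by gcongr
    _ ≤ p * (Fintype.card α : ℝ) ^ (m + 1 + s) +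
          7 * (Fintype.card α : ℝ) ^ s / meanDeletions α s *
            ((Fintype.card α : ℝ) ^ (m + 1) * (1 / 7)) := by gcongr
    _ = (p + 1 / meanDeletions α s) * (Fintype.card α : ℝ) ^ (m + 1 + s) := by ring
    _ ≤ 7 / meanDeletions α (m + 1 + s) * (Fintype.card α : ℝ) ^ (m + 1 + s) := by gcongr
    _ = _ := by ring

variable (α)

lemma exists_isSingleInsertionCovering_card_le_div_meanDeletions (n : ℕ) :
    ∃ C : Finset (List α), IsSingleInsertionCovering n C ∧
      (#C : ℝ) ≤ 7 * (Fintype.card α : ℝ) ^ n / meanDeletions α n := by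
  induction n using Nat.strong_induction_on with
  | _ n ih =>
    rcases le_or_gt (meanDeletions α n) 7 with hsmall | hlarge
    · refine ⟨wordsOfLength α n, isSingleInsertionCovering_wordsOfLength n, ?_⟩
      rw [card_wordsOfLength, Nat.cast_pow, le_div_iff₀ (meanDeletions_pos α n), mul_comm]
      gcongr
    · have hn : n ≠ 0 := by
        rintro rfl
        norm_num [meanDeletions] at hlarge
      obtain ⟨m, s, rfl, hsm, hms⟩ : ∃ m s, n = m + 1 + s ∧ s ≤ m ∧ m ≤ s + 1 :=
        ⟨n / 2, n - 1 - n / 2, by omega, by omega, by omega⟩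
      have hm : 2 ≤ meanDeletions α m := by
        linarith [meanDeletions_add_one_add_le α m s, meanDeletions_mono α hsm]
      obtain ⟨D, hD, hDcard⟩ := ih s (by omega)
      exact hD.exists_extension_card_le hsm hms hm hDcard

theorem single_insertion_covering_upper_bound_general (n : ℕ) :
    ∃ C : Finset (List α), IsSingleInsertionCovering n C ∧
      (#C : ℝ) ≤ 7 * (Fintype.card α : ℝ) ^ (n + 1) /
        (((n : ℝ) + 1) * ((Fintype.card α : ℝ) - 1) + 1) := by
  obtain ⟨C, hC, hCcard⟩ := exists_isSingleInsertionCovering_card_le_div_meanDeletions α n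
  refine ⟨C, hC, hCcard.trans_eq ?_⟩
  have hq : (Fintype.card α : ℝ) ≠ 0 := Nat.cast_ne_zero.2 Fintype.card_ne_zero
  rw [← card_mul_meanDeletions, ← mul_div_mul_left _ _ hq, pow_succ']
  ring

end Recursion

/-- Existence of small single-insertion-covering codes over `Σ_q`:
there is a single-insertion-covering code `C ⊆ Σ_q^n` with
`|C| ≤ 7·q^(n+1)/((n+1)(q-1)+1)`, i.e. `K_I^q(n,1) ≤ 7 q^(n+1)/((n+1)(q-1)+1)`. -/
theorem single_insertion_covering_upper_bound (n q : ℕ) (hn : 1 ≤ n) (hq : 2 ≤ q) :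
    ∃ C : Finset (List (Fin q)),
      (∀ c ∈ C, c.length = n) ∧
      (∀ y : List (Fin q), y.length = n + 1 → ∃ c ∈ C, c.Sublist y) ∧
      (C.card : ℝ) ≤ 7 * (q : ℝ) ^ (n + 1) / (((n : ℝ) + 1) * ((q : ℝ) - 1) + 1) := by
  have : NeZero q := ⟨by omega⟩
  obtain ⟨C, hC, hCcard⟩ := single_insertion_covering_upper_bound_general (Fin q) n
  exact ⟨C, hC.length_eq, hC.exists_sublist, by simpa only [Fintype.card_fin] using hCcard⟩
end

section
/- For every fixed integer R ≥ 2 and binary alphabet (q = 2), limsup_{n→∞} K_D(n,R)·n^R/(2^n·R!) ≤ e·(R·ln R + √(2R·ln R) + 1). -/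
/-- `KDbin n R` is the minimum cardinality of an `R`-deletion-covering code of
binary length-`n` words. -/
noncomputable def KDbin (n R : ℕ) : ℕ :=
  sInf {k : ℕ | ∃ C : Finset (List (Fin 2)),
    (∀ c ∈ C, c.length = n) ∧
    (∀ y : List (Fin 2), y.length = n - R → ∃ c ∈ C, y.Sublist c) ∧
    C.card = k}

/-! Let `n = a + N` with `N ≈ n / R`, and split every word of length `n - R` into a prefix of
length `a` and a suffix of length `N - R`. A word of length `a` has at least `choose (a + R - 1) a`
supersequences of length `a + R - 1`, so about `t * 2 ^ (a + R - 1) / choose (a + R - 1) a` greedily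
chosen words of that length cover all but a fraction `exp (-t)` of the prefixes with `R - 1`
deletions. They are completed by a Varshamov–Tenengolts code, which covers the suffixes with one
more deletion; the uncovered prefixes are completed by an optimal `R`-deletion-covering code of
length `N`. For the normalised size `κ` of an optimal code this reads
`κ n ≤ t * (R / (R - 1)) ^ (R - 1) + o(1) + exp (-t) * R ^ R * κ (n / R)`, whence
`limsup κ ≤ t * e / (1 - exp (-t) * R ^ R)`. With `x = R * log R` and `t = x + √(2 * x)` the
denominator is `1 - exp (-√(2 * x))`, and `exp s ≥ 1 + s + s ^ 2 / 2` at `s = √(2 * x)` finishes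
the proof. -/

namespace DeletionCovering

open Filter Finset Topology

section GreedyCover

variable {α β : Type*} {X : Finset α} {Y : Finset β} {r : α → β → Prop} [DecidableRel r] {d : ℕ}

theorem exists_card_mul_le_card_filter_mul (hX : X.Nonempty)
    (hd : ∀ y ∈ Y, d ≤ #{x ∈ X | r x y}) : ∃ x ∈ X, #Y * d ≤ #{y ∈ Y | r x y} * #X := by
  refine exists_le_of_sum_le hX ?_
  have double_count : ∑ x ∈ X, #{y ∈ Y | r x y} = ∑ y ∈ Y, #{x ∈ X | r x y} :=
    sum_card_bipartiteAbove_eq_sum_card_bipartiteBelow r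
  calc ∑ _x ∈ X, #Y * d = (#Y * d) * #X := by rw [sum_const, smul_eq_mul, mul_comm]
    _ ≤ (∑ y ∈ Y, #{x ∈ X | r x y}) * #X := by
      gcongr
      exact card_nsmul_le_sum _ _ _ hd
    _ = ∑ x ∈ X, #{y ∈ Y | r x y} * #X := by rw [← double_count, sum_mul]

theorem exists_card_filter_not_le_mul_exp_neg (hX : X.Nonempty)
    (hd : ∀ y ∈ Y, d ≤ #{x ∈ X | r x y}) :
    ∃ x ∈ X, (#{y ∈ Y | ¬ r x y} : ℝ) ≤ #Y * Real.exp (-(d / #X)) := by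
  obtain ⟨x, hx, hle⟩ := exists_card_mul_le_card_filter_mul hX hd
  have hX' : (0 : ℝ) < #X := mod_cast hX.card_pos
  have hsplit : (#{y ∈ Y | r x y} : ℝ) + #{y ∈ Y | ¬ r x y} = #Y :=
    mod_cast card_filter_add_card_filter_not (s := Y) (r x)
  have hhit : (#Y : ℝ) * (d / #X) ≤ #{y ∈ Y | r x y} := by
    rw [← mul_div_assoc, div_le_iff₀ hX']
    exact_mod_cast hle
  refine ⟨x, hx, ?_⟩
  calc (#{y ∈ Y | ¬ r x y} : ℝ) ≤ #Y * (-(d / #X) + 1) := by linarith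
    _ ≤ #Y * Real.exp (-(d / #X)) := by gcongr; exact Real.add_one_le_exp _

theorem exists_subset_card_filter_forall_not_le (hX : X.Nonempty)
    (hd : ∀ y ∈ Y, d ≤ #{x ∈ X | r x y}) (M : ℕ) :
    ∃ A ⊆ X, #A ≤ M ∧
      (#{y ∈ Y | ∀ x ∈ A, ¬ r x y} : ℝ) ≤ #Y * Real.exp (-(M * (d / #X))) := by
  classical
  induction M with
  | zero => exact ⟨∅, by simp⟩
  | succ M ih =>
    obtain ⟨A, hAX, hAM, hA⟩ := ih
    obtain ⟨x, hx, hxle⟩ := exists_card_filter_not_le_mul_exp_neg (Y := {y ∈ Y | ∀ x ∈ A, ¬ r x y})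
      hX fun y hy ↦ hd y (mem_of_mem_filter y hy)
    refine ⟨insert x A, insert_subset hx hAX, (card_insert_le x A).trans (by lia), ?_⟩
    have hinsert : {y ∈ Y | ∀ z ∈ insert x A, ¬ r z y} =
        {y ∈ {y ∈ Y | ∀ z ∈ A, ¬ r z y} | ¬ r x y} := by
      simp only [filter_filter, forall_mem_insert, and_comm]
    calc (#{y ∈ Y | ∀ z ∈ insert x A, ¬ r z y} : ℝ)
        ≤ #{y ∈ Y | ∀ z ∈ A, ¬ r z y} * Real.exp (-(d / #X)) := by rwa [hinsert]
      _ ≤ #Y * Real.exp (-(M * (d / #X))) * Real.exp (-(d / #X)) := by gcongr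
      _ = #Y * Real.exp (-((M + 1 : ℕ) * (d / #X))) := by
        rw [mul_assoc, ← Real.exp_add]
        push_cast
        ring_nf

end GreedyCover

section Words

variable (α : Type*) [Fintype α]

/-- The finite set of words of length `n` over the alphabet `α`. -/
noncomputable def words (n : ℕ) : Finset (List α) :=
  (List.finite_length_eq α n).toFinset

variable {α} {n : ℕ}

@[simp]
theorem mem_words {x : List α} : x ∈ words α n ↔ x.length = n := by
  simp [words]

theorem card_filter_words_succ (P : List α → Prop) [DecidablePred P] :
    #{x ∈ words α (n + 1) | P x} = ∑ b : α, #{x ∈ words α n | P (b :: x)} := by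
  rw [← card_sigma]
  symm
  refine card_bij (fun p _ ↦ p.1 :: p.2) (by simp) ?_ ?_
  · rintro ⟨b, x⟩ - ⟨b', x'⟩ - h
    grind
  · rintro (_ | ⟨b, x⟩) hx
    · simp at hx
    · exact ⟨⟨b, x⟩, by simpa using hx, rfl⟩

@[simp]
theorem card_words (n : ℕ) : #(words α n) = Fintype.card α ^ n := by
  induction n with
  | zero => simp [words, List.length_eq_zero_iff]
  | succ n ih => simpa [ih, pow_succ'] using card_filter_words_succ (α := α) (n := n) fun _ ↦ True

variable [DecidableEq α]

theorem card_supersequences_cons (a : α) (y : List α) :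
    #{x ∈ words α (n + 1) | (a :: y).Sublist x} = #{x ∈ words α n | y.Sublist x} +
      (Fintype.card α - 1) * #{x ∈ words α n | (a :: y).Sublist x} := by
  rw [card_filter_words_succ, ← add_sum_erase _ _ (mem_univ a)]
  congr 1
  · simp only [List.cons_sublist_cons]
  · rw [sum_congr rfl fun b hb ↦ ?_, sum_const, card_erase_of_mem (mem_univ a), card_univ,
      smul_eq_mul]
    simp only [List.cons_sublist_cons', (ne_of_mem_erase hb).symm, false_and, or_false]

theorem choose_mul_pow_le_card_supersequences (n : ℕ) (y : List α) :
    n.choose y.length * (Fintype.card α - 1) ^ (n - y.length) ≤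
      #{x ∈ words α n | y.Sublist x} := by
  induction n generalizing y with
  | zero => cases y <;> simp [words]
  | succ n ih =>
    cases y with
    | nil => simpa using Nat.pow_le_pow_left (Nat.sub_le _ _) _
    | cons a y =>
      have hpow : n.choose (y.length + 1) * (Fintype.card α - 1) ^ (n - y.length) =
          (Fintype.card α - 1) *
            (n.choose (y.length + 1) * (Fintype.card α - 1) ^ (n - (y.length + 1))) := by
        obtain hn | hn := lt_or_ge n (y.length + 1)
        · simp [Nat.choose_eq_zero_of_lt hn]
        · rw [show n - y.length = n - (y.length + 1) + 1 by lia, pow_succ]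
          ring
      rw [List.length_cons, Nat.choose_succ_succ', Nat.add_sub_add_right, add_mul, hpow,
        card_supersequences_cons]
      gcongr
      · exact ih y
      · exact ih (a :: y)

end Words

section Covering

variable {α : Type*}

/-- `C` consists of words of length `n` and every word of length `m` is a subsequence of one of
them, that is, `C` is an `(n - m)`-deletion-covering code. Keeping the two lengths `m` and `n`
instead of `n` and the number of deletions avoids truncated subtraction. -/
structure IsDeletionCovering (m n : ℕ) (C : Finset (List α)) : Prop where
  length_eq : ∀ c ∈ C, c.length = n
  exists_sublist : ∀ y : List α, y.length = m → ∃ c ∈ C, y.Sublist c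

theorem isDeletionCovering_words [Fintype α] [Nonempty α] (m R : ℕ) :
    IsDeletionCovering m (m + R) (words α (m + R)) where
  length_eq _ := mem_words.1
  exists_sublist y hy := ⟨y ++ List.replicate R (Classical.arbitrary α), by simp [hy],
    List.sublist_append_left _ _⟩

variable [DecidableEq α]

/-- The words of length `a` that are a subsequence of no word in `A`. -/
noncomputable def uncovered [Fintype α] (A : Finset (List α)) (a : ℕ) : Finset (List α) :=
  {y ∈ words α a | ∀ x ∈ A, ¬ y.Sublist x}

theorem exists_subset_card_uncovered_le [Fintype α] [Nonempty α] (a k M : ℕ) :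
    ∃ A ⊆ words α (a + k), #A ≤ M ∧
      (#(uncovered A a) : ℝ) ≤ (Fintype.card α : ℝ) ^ a *
        Real.exp (-(M * (((a + k).choose k * (Fintype.card α - 1) ^ k : ℕ) /
          (Fintype.card α : ℝ) ^ (a + k)))) := by
  have hne : (words α (a + k)).Nonempty :=
    ⟨List.replicate (a + k) (Classical.arbitrary α), by simp⟩
  have hsup : ∀ y ∈ words α a, (a + k).choose k * (Fintype.card α - 1) ^ k ≤
      #{x ∈ words α (a + k) | y.Sublist x} := fun y hy ↦ by
    have h := choose_mul_pow_le_card_supersequences (a + k) y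
    rwa [mem_words.1 hy, Nat.choose_symm_add, Nat.add_sub_cancel_left] at h
  have h := exists_subset_card_filter_forall_not_le (r := fun x y ↦ List.Sublist y x) hne hsup M
  rw [card_words, card_words, Nat.cast_pow, Nat.cast_pow] at h
  exact h

theorem IsDeletionCovering.union_append [Fintype α] {a p m n₁ n₂ : ℕ} {A V D : Finset (List α)}
    (hA : A ⊆ words α p) (hV : IsDeletionCovering m n₁ V) (hD : IsDeletionCovering m n₂ D)
    (hn : p + n₁ = a + n₂) :
    IsDeletionCovering (a + m) (a + n₂)
      (image₂ (· ++ ·) A V ∪ image₂ (· ++ ·) (uncovered A a) D) where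
  length_eq c hc := by
    simp only [mem_union, mem_image₂] at hc
    obtain ⟨x, hx, v, hv, rfl⟩ | ⟨x, hx, v, hv, rfl⟩ := hc
    · rw [List.length_append, mem_words.1 (hA hx), hV.length_eq v hv, hn]
    · rw [List.length_append, mem_words.1 (mem_of_mem_filter x hx), hD.length_eq v hv]
  exists_sublist y hy := by
    have hsuffix : (y.drop a).length = m := by simp [hy]
    by_cases hcov : ∃ x ∈ A, (y.take a).Sublist x
    · obtain ⟨x, hx, hyx⟩ := hcov
      obtain ⟨v, hv, hyv⟩ := hV.exists_sublist _ hsuffix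
      refine ⟨x ++ v, mem_union_left _ (mem_image₂_of_mem hx hv), ?_⟩
      simpa using hyx.append hyv
    · obtain ⟨v, hv, hyv⟩ := hD.exists_sublist _ hsuffix
      refine ⟨y.take a ++ v, mem_union_right _ (mem_image₂_of_mem ?_ hv), ?_⟩
      · simpa [uncovered, hy] using hcov
      · simpa using (List.Sublist.refl (y.take a)).append hyv

end Covering

section VarshamovTenengolts

/-- The Varshamov–Tenengolts checksum `∑ i * x i` over positions `i = 1, 2, …`: the one in
position `i` is counted once for each of the `i` suffixes that contain it. -/
def vtSum : List (Fin 2) → ℕ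
  | [] => 0
  | b :: x => vtSum x + (b :: x).count 1

theorem vtSum_append (u v : List (Fin 2)) :
    vtSum (u ++ v) = vtSum u + vtSum v + u.length * v.count 1 := by
  induction u with
  | nil => simp [vtSum]
  | cons b u ih =>
    simp only [List.cons_append, vtSum, ih, List.count_cons, List.count_append, List.length_cons]
    ring

theorem vtSum_append_zero_cons (u v : List (Fin 2)) :
    vtSum (u ++ 0 :: v) = vtSum (u ++ v) + v.count 1 := by
  have hcount : (0 :: v).count 1 = v.count 1 := List.count_cons_of_ne (by decide)
  simp only [vtSum_append, vtSum, hcount]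
  ring

theorem vtSum_append_one_cons (u v : List (Fin 2)) :
    vtSum (u ++ 1 :: v) = vtSum (u ++ v) + (u.length + v.count 1 + 1) := by
  simp only [vtSum_append, vtSum, List.count_cons_self]
  ring

theorem exists_append_count_eq (y : List (Fin 2)) {r : ℕ} (hr : r ≤ y.count 1) :
    ∃ u v, y = u ++ v ∧ v.count 1 = r := by
  induction y with
  | nil => exact ⟨[], [], rfl, by grind⟩
  | cons b y ih =>
    obtain h | h := le_or_gt r (y.count 1)
    · obtain ⟨u, v, rfl, hv⟩ := ih h
      exact ⟨b :: u, v, rfl, hv⟩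
    · exact ⟨[], b :: y, rfl, by grind⟩

-- Moving the cut past a `0` adds one to `u.length + v.count 1`, and past a `1` adds nothing.
theorem exists_append_length_add_count_eq (y : List (Fin 2)) {r : ℕ} (hr : y.count 1 ≤ r)
    (hr' : r ≤ y.length) : ∃ u v, y = u ++ v ∧ u.length + v.count 1 = r := by
  induction y generalizing r with
  | nil => exact ⟨[], [], rfl, by grind⟩
  | cons b y ih =>
    obtain h | h := hr.eq_or_lt
    · exact ⟨[], b :: y, rfl, by simpa using h⟩
    · obtain ⟨u, v, rfl, huv⟩ := ih (r := r - 1) (by grind) (by grind)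
      exact ⟨b :: u, v, rfl, by grind⟩

-- Inserting a `0` reaches `r ≤ y.count 1`, inserting a `1` reaches the larger `r`.
theorem exists_insertion_vtSum_eq_add (y : List (Fin 2)) {r : ℕ} (hr : r ≤ y.length + 1) :
    ∃ x : List (Fin 2), x.length = y.length + 1 ∧ y.Sublist x ∧ vtSum x = vtSum y + r := by
  have insertion (u v : List (Fin 2)) (b : Fin 2) : (u ++ b :: v).length = (u ++ v).length + 1 ∧
      (u ++ v).Sublist (u ++ b :: v) :=
    ⟨by grind, (List.Sublist.refl u).append (List.sublist_cons_self b v)⟩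
  obtain h | h := le_or_gt r (y.count 1)
  · obtain ⟨u, v, rfl, rfl⟩ := exists_append_count_eq y h
    obtain ⟨hlen, hsub⟩ := insertion u v 0
    exact ⟨_, hlen, hsub, vtSum_append_zero_cons u v⟩
  · obtain ⟨u, v, rfl, huv⟩ :=
      exists_append_length_add_count_eq y (r := r - 1) (by lia) (by lia)
    obtain ⟨hlen, hsub⟩ := insertion u v 1
    exact ⟨_, hlen, hsub, by rw [vtSum_append_one_cons]; lia⟩

/-- The Varshamov–Tenengolts code of length `n` and residue `s`. -/
noncomputable def vtCode (n : ℕ) (s : ZMod (n + 1)) : Finset (List (Fin 2)) :=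
  {x ∈ words (Fin 2) n | (vtSum x : ZMod (n + 1)) = s}

theorem isDeletionCovering_vtCode (m : ℕ) (s : ZMod (m + 2)) :
    IsDeletionCovering m (m + 1) (vtCode (m + 1) s) where
  length_eq _ hc := mem_words.1 (mem_of_mem_filter _ hc)
  exists_sublist y hy := by
    have hr : (s - vtSum y).val ≤ y.length + 1 := by
      rw [hy]
      exact Nat.le_of_lt_succ (ZMod.val_lt _)
    obtain ⟨x, hx, hyx, hsum⟩ := exists_insertion_vtSum_eq_add y hr
    refine ⟨x, mem_filter.2 ⟨by simp [hx, hy], ?_⟩, hyx⟩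
    rw [hsum, Nat.cast_add, ZMod.natCast_zmod_val, add_sub_cancel]

theorem exists_card_vtCode_le (n : ℕ) :
    ∃ s : ZMod (n + 1), (#(vtCode n s) : ℝ) ≤ 2 ^ n / (n + 1) := by
  obtain ⟨s, -, hs⟩ := exists_card_fiber_le_of_card_le_nsmul (s := words (Fin 2) n)
    (t := (univ : Finset (ZMod (n + 1)))) (f := fun x ↦ (vtSum x : ZMod (n + 1)))
    (b := (2 : ℝ) ^ n / (n + 1)) univ_nonempty (by
      rw [card_words, card_univ, ZMod.card, nsmul_eq_mul]
      push_cast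
      rw [mul_div_cancel₀]
      · simp
      · positivity)
  exact ⟨s, hs⟩

end VarshamovTenengolts

section Recursion

theorem KDbin_add_le_card {m R : ℕ} {C : Finset (List (Fin 2))}
    (hC : IsDeletionCovering m (m + R) C) : KDbin (m + R) R ≤ #C :=
  Nat.sInf_le ⟨C, hC.length_eq, fun y hy ↦ hC.exists_sublist y (by simpa using hy), rfl⟩

theorem exists_isDeletionCovering_card_eq_KDbin (m R : ℕ) :
    ∃ C : Finset (List (Fin 2)), IsDeletionCovering m (m + R) C ∧ #C = KDbin (m + R) R := by
  have hwords := isDeletionCovering_words (α := Fin 2) m R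
  obtain ⟨C, hlen, hcov, hcard⟩ := Nat.sInf_mem (s := {k : ℕ | ∃ C : Finset (List (Fin 2)),
    (∀ c ∈ C, c.length = m + R) ∧
    (∀ y : List (Fin 2), y.length = m + R - R → ∃ c ∈ C, y.Sublist c) ∧
    #C = k}) ⟨_, _, hwords.length_eq, fun y hy ↦ hwords.exists_sublist y (by simpa using hy), rfl⟩
  exact ⟨C, ⟨hlen, fun y hy ↦ hcov y (by simpa using hy)⟩, hcard⟩

theorem KDbin_le_mul_add_mul (a m k M : ℕ) :
    (KDbin (a + (m + (k + 1))) (k + 1) : ℝ) ≤ M * (2 ^ (m + 1) / (m + 2)) +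
      2 ^ a * Real.exp (-(M * ((a + k).choose k / 2 ^ (a + k)))) *
        KDbin (m + (k + 1)) (k + 1) := by
  obtain ⟨s, hV⟩ := exists_card_vtCode_le (m + 1)
  obtain ⟨D, hD, hDcard⟩ := exists_isDeletionCovering_card_eq_KDbin m (k + 1)
  obtain ⟨A, hA, hAM, hU⟩ := exists_subset_card_uncovered_le (α := Fin 2) a k M
  set U := uncovered A a
  set V := vtCode (m + 1) s
  have hcode := IsDeletionCovering.union_append hA (isDeletionCovering_vtCode m s) hD
    (show a + k + (m + 1) = a + (m + (k + 1)) by lia)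
  rw [← add_assoc] at hcode
  have hcard : KDbin (a + (m + (k + 1))) (k + 1) ≤ #A * #V + #U * #D := calc
    KDbin (a + (m + (k + 1))) (k + 1)
      ≤ #(image₂ (· ++ ·) A V ∪ image₂ (· ++ ·) U D) := by
        rw [← add_assoc]
        exact KDbin_add_le_card hcode
    _ ≤ #A * #V + #U * #D := (card_union_le _ _).trans
      (add_le_add (card_image₂_le _ _ _) (card_image₂_le _ _ _))
  calc (KDbin (a + (m + (k + 1))) (k + 1) : ℝ) ≤ #A * #V + #U * #D := mod_cast hcard
    _ ≤ M * (2 ^ (m + 1) / (m + 2)) + 2 ^ a * Real.exp (-(M * ((a + k).choose k / 2 ^ (a + k)))) *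
        KDbin (m + (k + 1)) (k + 1) := by
      rw [hDcard]
      gcongr
      · exact hV.trans_eq (by push_cast; ring)
      · simpa using hU

theorem KDbin_le_exp_neg_mul_add (a m k : ℕ) {t : ℝ} (ht : 0 ≤ t) :
    (KDbin (a + (m + (k + 1))) (k + 1) : ℝ) ≤
      (t * 2 ^ (a + k) / (a + k).choose k + 1) * (2 ^ (m + 1) / (m + 2)) +
        2 ^ a * Real.exp (-t) * KDbin (m + (k + 1)) (k + 1) := by
  have hchoose : (0 : ℝ) < (a + k).choose k := mod_cast Nat.choose_pos (Nat.le_add_left k a)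
  set p : ℝ := (a + k).choose k / 2 ^ (a + k) with hp
  have hp0 : 0 < p := by positivity
  have hceil : t ≤ ⌈t / p⌉₊ * p := (div_le_iff₀ hp0).1 (Nat.le_ceil _)
  have hceil' : (⌈t / p⌉₊ : ℝ) ≤ t * 2 ^ (a + k) / (a + k).choose k + 1 := by
    rw [← div_div_eq_mul_div, ← hp]
    exact (Nat.ceil_lt_add_one (by positivity)).le
  refine (KDbin_le_mul_add_mul a m k ⌈t / p⌉₊).trans ?_
  gcongr

end Recursion

section Density

/-- The normalised size `K_D(n, R) * n ^ R / (2 ^ n * R!)` of an optimal code. -/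
noncomputable def coveringDensity (n R : ℕ) : ℝ :=
  KDbin n R * (n : ℝ) ^ R / (2 ^ n * (R.factorial : ℝ))

theorem coveringDensity_nonneg (n R : ℕ) : 0 ≤ coveringDensity n R := by
  unfold coveringDensity
  positivity

theorem add_one_pow_le_factorial_mul_choose (a k : ℕ) :
    (a + 1) ^ k ≤ k.factorial * (a + k).choose k :=
  (Nat.pow_succ_le_ascFactorial _ k).trans_eq (Nat.ascFactorial_eq_factorial_mul_choose a k)

variable {a m k n : ℕ}

theorem covered_term_le (hn : n = a + (m + (k + 1))) {t : ℝ} (ht : 0 ≤ t) :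
    t * 2 ^ (a + k) / (a + k).choose k * (2 ^ (m + 1) / (m + 2)) *
        (n ^ (k + 1) / (2 ^ n * (k + 1).factorial)) ≤
      t / (((a + 1) / n) ^ k * ((k + 1) * ((m + 2) / n))) := by
  have hn0 : (0 : ℝ) < n := by rw [hn]; positivity
  have hchoose : (0 : ℝ) < (a + k).choose k := mod_cast Nat.choose_pos (Nat.le_add_left k a)
  have hpow : ((a : ℝ) + 1) ^ k ≤ k.factorial * (a + k).choose k :=
    mod_cast add_one_pow_le_factorial_mul_choose a k
  have htwo : (2 : ℝ) ^ n = 2 ^ (a + k) * 2 ^ (m + 1) := by rw [← pow_add, hn]; ring_nf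
  have hfactorial : ((k + 1).factorial : ℝ) = (k + 1) * k.factorial := mod_cast k.factorial_succ
  calc
    _ = t * (n ^ (k + 1) / (k.factorial * (a + k).choose k * ((k + 1) * (m + 2)))) := by
      rw [htwo, hfactorial]; field_simp
    _ ≤ t * (n ^ (k + 1) / ((a + 1) ^ k * ((k + 1) * (m + 2)))) := by gcongr
    _ = _ := by rw [div_pow, pow_succ]; field_simp

theorem rounding_term_le (hn : n = a + (m + (k + 1))) :
    (2 : ℝ) ^ (m + 1) / (m + 2) * (n ^ (k + 1) / (2 ^ n * (k + 1).factorial)) ≤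
      n ^ (k + 1) / 2 ^ a := by
  have htwo : (2 : ℝ) ^ n = 2 ^ a * 2 ^ k * 2 ^ (m + 1) := by rw [← pow_add, ← pow_add, hn]; ring_nf
  calc (2 : ℝ) ^ (m + 1) / (m + 2) * (n ^ (k + 1) / (2 ^ n * (k + 1).factorial))
      = n ^ (k + 1) / (2 ^ a * (2 ^ k * ((m + 2) * (k + 1).factorial))) := by
        rw [htwo]; field_simp
    _ ≤ n ^ (k + 1) / (2 ^ a * 1) := by
      gcongr
      exact_mod_cast (by positivity : 0 < 2 ^ k * ((m + 2) * (k + 1).factorial))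
    _ = n ^ (k + 1) / 2 ^ a := by rw [mul_one]

theorem uncovered_term_eq (hn : n = a + (m + (k + 1))) (t : ℝ) :
    2 ^ a * Real.exp (-t) * KDbin (m + (k + 1)) (k + 1) *
        (n ^ (k + 1) / (2 ^ n * (k + 1).factorial)) =
      Real.exp (-t) * (n / (m + (k + 1) : ℕ)) ^ (k + 1) *
        coveringDensity (m + (k + 1)) (k + 1) := by
  have htwo : (2 : ℝ) ^ n = 2 ^ a * 2 ^ (m + (k + 1)) := by rw [← pow_add, hn]
  rw [coveringDensity, htwo, div_pow]
  field_simp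

theorem coveringDensity_le_add_mul (hn : n = a + (m + (k + 1))) {t : ℝ} (ht : 0 ≤ t) :
    coveringDensity n (k + 1) ≤ t / (((a + 1) / n) ^ k * ((k + 1) * ((m + 2) / n))) +
      n ^ (k + 1) / 2 ^ a +
      Real.exp (-t) * (n / (m + (k + 1) : ℕ)) ^ (k + 1) *
        coveringDensity (m + (k + 1)) (k + 1) := by
  calc coveringDensity n (k + 1)
      = KDbin n (k + 1) * (n ^ (k + 1) / (2 ^ n * (k + 1).factorial)) := mul_div_assoc _ _ _
    _ ≤ ((t * 2 ^ (a + k) / (a + k).choose k + 1) * (2 ^ (m + 1) / (m + 2)) +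
          2 ^ a * Real.exp (-t) * KDbin (m + (k + 1)) (k + 1)) *
        (n ^ (k + 1) / (2 ^ n * (k + 1).factorial)) := by
      gcongr
      rw [hn]
      exact KDbin_le_exp_neg_mul_add a m k ht
    _ ≤ _ := by
      rw [add_mul, add_one_mul, add_mul, uncovered_term_eq hn]
      gcongr
      · exact covered_term_le hn ht
      · exact rounding_term_le hn

end Density

section Limsup

theorem bddAbove_range_of_eventually_le_add_mul_comp {f : ℕ → ℝ} {g : ℕ → ℕ} {c q : ℝ}
    (hg : ∀ᶠ n in atTop, g n < n) (hq0 : 0 ≤ q) (hq1 : q < 1)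
    (hf : ∀ᶠ n in atTop, f n ≤ c + q * f (g n)) : BddAbove (Set.range f) := by
  obtain ⟨n₀, h₀⟩ := eventually_atTop.1 (hg.and hf)
  obtain ⟨b, hb⟩ := ((Set.finite_lt_nat n₀).image f).bddAbove
  refine ⟨max b (c / (1 - q)), Set.forall_mem_range.2 fun n ↦ ?_⟩
  have hfix : c + q * max b (c / (1 - q)) ≤ max b (c / (1 - q)) := by
    have := (div_le_iff₀ (sub_pos.2 hq1)).1 (le_max_right b (c / (1 - q)))
    linarith
  induction n using Nat.strong_induction_on with
  | _ n ih =>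
    obtain hn | hn := lt_or_ge n n₀
    · exact le_max_of_le_left (hb (Set.mem_image_of_mem f hn))
    · calc f n ≤ c + q * f (g n) := (h₀ n hn).2
        _ ≤ c + q * max b (c / (1 - q)) := by gcongr; exact ih _ (h₀ n hn).1
        _ ≤ _ := hfix

theorem limsup_le_div_one_sub_of_eventually_le_add_mul_comp {f c q : ℕ → ℝ} {g : ℕ → ℕ}
    {c₀ q₀ : ℝ} (hf0 : ∀ n, 0 ≤ f n) (hg : ∀ᶠ n in atTop, g n < n) (hg' : Tendsto g atTop atTop)
    (hc : Tendsto c atTop (𝓝 c₀)) (hq : Tendsto q atTop (𝓝 q₀)) (hq0 : ∀ᶠ n in atTop, 0 ≤ q n)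
    (hq1 : q₀ < 1) (hf : ∀ᶠ n in atTop, f n ≤ c n + q n * f (g n)) :
    limsup f atTop ≤ c₀ / (1 - q₀) := by
  have hq₀ : 0 ≤ q₀ := ge_of_tendsto hq hq0
  obtain ⟨q', hqq', hq'1⟩ := exists_between hq1
  have hbdd : IsBoundedUnder (· ≤ ·) atTop f := by
    refine (bddAbove_range_of_eventually_le_add_mul_comp (c := c₀ + 1) hg (hq₀.trans hqq'.le)
      hq'1 ?_).isBoundedUnder_of_range
    filter_upwards [hf, hc.eventually_le_const (lt_add_one c₀), hq.eventually_le_const hqq']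
      with n hfn hcn hqn
    exact hfn.trans (add_le_add hcn (mul_le_mul_of_nonneg_right hqn (hf0 _)))
  have hcobdd : IsCoboundedUnder (· ≤ ·) atTop f :=
    (isBoundedUnder_of ⟨0, hf0⟩ : IsBoundedUnder (· ≥ ·) atTop f).isCoboundedUnder_le
  have hstep : ∀ b > limsup f atTop, limsup f atTop ≤ c₀ + q₀ * b := fun b hb ↦ by
    have hlim : Tendsto (fun n ↦ c n + q n * b) atTop (𝓝 (c₀ + q₀ * b)) :=
      hc.add (hq.mul_const b)
    rw [← hlim.limsup_eq]
    refine limsup_le_limsup ?_ hcobdd hlim.isBoundedUnder_le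
    filter_upwards [hf, hq0, hg'.eventually (eventually_lt_of_limsup_lt hb hbdd)]
      with n hfn hqn hfgn
    exact hfn.trans (by gcongr)
  have hfix : limsup f atTop ≤ c₀ + q₀ * limsup f atTop := by
    have hcont : Continuous fun b ↦ c₀ + q₀ * b := by fun_prop
    exact ge_of_tendsto (hcont.continuousWithinAt (s := Set.Ioi _))
      (eventually_mem_nhdsWithin.mono hstep)
  rw [le_div_iff₀ (sub_pos.2 hq1)]
  linarith

theorem tendsto_natDiv_div_self (d : ℕ) :
    Tendsto (fun n : ℕ ↦ ((n / d : ℕ) : ℝ) / n) atTop (𝓝 (d : ℝ)⁻¹) := by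
  have h := (tendsto_nat_floor_mul_div_atTop (inv_nonneg.2 (Nat.cast_nonneg (α := ℝ) d))).comp
    tendsto_natCast_atTop_atTop
  refine h.congr fun n ↦ ?_
  rw [Function.comp_apply, inv_mul_eq_div, Nat.floor_div_eq_div]

theorem exp_neg_one_le_one_sub_inv_pow (k : ℕ) :
    Real.exp (-1) ≤ (1 - ((k : ℝ) + 1)⁻¹) ^ k := by
  obtain rfl | hk := k.eq_zero_or_pos
  · simp
  have hk' : (0 : ℝ) < k := mod_cast hk
  calc Real.exp (-1) = (Real.exp (k : ℝ)⁻¹)⁻¹ ^ k := by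
        rw [← Real.exp_neg, ← Real.exp_nat_mul, mul_neg, mul_inv_cancel₀ hk'.ne']
    _ ≤ ((k : ℝ)⁻¹ + 1)⁻¹ ^ k := by gcongr; exact Real.add_one_le_exp _
    _ = (1 - ((k : ℝ) + 1)⁻¹) ^ k := by congr 1; field_simp; ring

/-- The additive term of the recursion for `coveringDensity n (k + 1)` when the last
`n / (k + 1)` letters form the suffix: the contribution of the words with a covered prefix. -/
noncomputable def recursionConstant (k : ℕ) (t : ℝ) (n : ℕ) : ℝ :=
  t / ((1 - (n / (k + 1) : ℕ) / n + 1 / n) ^ k *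
    ((k + 1) * ((n / (k + 1) : ℕ) / n - (k - 1) / n))) + n ^ (k + 1) / √2 ^ n

/-- The coefficient of `coveringDensity (n / (k + 1)) (k + 1)` in the recursion for
`coveringDensity n (k + 1)`: the contribution of the words with an uncovered prefix. -/
noncomputable def recursionFactor (k : ℕ) (t : ℝ) (n : ℕ) : ℝ :=
  Real.exp (-t) * ((n / (k + 1) : ℕ) / n : ℝ)⁻¹ ^ (k + 1)

theorem eventually_coveringDensity_le {k : ℕ} (hk : 1 ≤ k) {t : ℝ} (ht : 0 ≤ t) :
    ∀ᶠ n : ℕ in atTop, coveringDensity n (k + 1) ≤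
      recursionConstant k t n + recursionFactor k t n * coveringDensity (n / (k + 1)) (k + 1) := by
  have hlarge := (Nat.tendsto_div_const_atTop k.succ_ne_zero).eventually_ge_atTop (k + 1)
  filter_upwards [hlarge, eventually_gt_atTop 0] with n hkN hn
  unfold recursionConstant recursionFactor
  set N := n / (k + 1)
  have hNn : 2 * N ≤ n :=
    (Nat.mul_le_mul_right N (by lia : 2 ≤ k + 1)).trans (Nat.mul_div_le n (k + 1))
  obtain ⟨m, hm⟩ := Nat.exists_eq_add_of_le' hkN
  obtain ⟨a, ha⟩ : ∃ a, n = a + N := Nat.exists_eq_add_of_le' (by lia)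
  have hN' : (N : ℝ) = m + (k + 1) := mod_cast hm
  have ha' : (n : ℝ) = a + N := mod_cast ha
  have hprefix : 1 - (N : ℝ) / n + 1 / n = (a + 1) / n := by
    field_simp
    linarith
  have hsuffix : (N : ℝ) / n - (k - 1) / n = (m + 2) / n := by
    rw [hN']
    ring
  have hsqrt : √2 ^ n ≤ (2 : ℝ) ^ a := calc
    √2 ^ n ≤ √2 ^ (2 * a) := pow_le_pow_right₀ (Real.one_le_sqrt.2 one_le_two) (by lia)
    _ = 2 ^ a := by rw [pow_mul, Real.sq_sqrt zero_le_two]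
  rw [hprefix, hsuffix, inv_div, hm]
  refine (coveringDensity_le_add_mul (hm ▸ ha) ht).trans ?_
  gcongr

theorem tendsto_recursionConstant (k : ℕ) (t : ℝ) :
    Tendsto (recursionConstant k t) atTop (𝓝 (t / (1 - ((k : ℝ) + 1)⁻¹) ^ k)) := by
  have hratio : Tendsto (fun n : ℕ ↦ ((n / (k + 1) : ℕ) : ℝ) / n) atTop (𝓝 ((k : ℝ) + 1)⁻¹) :=
    mod_cast tendsto_natDiv_div_self (k + 1)
  have hdiv (x : ℝ) := tendsto_const_div_atTop_nhds_zero_nat x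
  have hprefix : Tendsto (fun n : ℕ ↦ (1 - (n / (k + 1) : ℕ) / n + 1 / n : ℝ) ^ k) atTop
      (𝓝 ((1 - ((k : ℝ) + 1)⁻¹) ^ k)) := by
    simpa only [add_zero] using ((hratio.const_sub 1).add (hdiv 1)).pow k
  have hsuffix : Tendsto
      (fun n : ℕ ↦ ((k : ℝ) + 1) * ((n / (k + 1) : ℕ) / n - (k - 1) / n)) atTop (𝓝 1) := by
    have h := (hratio.sub (hdiv (k - 1))).const_mul ((k : ℝ) + 1)
    rwa [sub_zero, mul_inv_cancel₀ (by positivity)] at h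
  have hrounding : Tendsto (fun n : ℕ ↦ (n : ℝ) ^ (k + 1) / √2 ^ n) atTop (𝓝 0) :=
    tendsto_pow_const_div_const_pow_of_one_lt (k + 1) Real.one_lt_sqrt_two
  have hne : (1 - ((k : ℝ) + 1)⁻¹) ^ k ≠ 0 :=
    ((Real.exp_pos _).trans_le (exp_neg_one_le_one_sub_inv_pow k)).ne'
  have hmain := (tendsto_const_nhds (x := t)).div (hprefix.mul hsuffix) (by rwa [mul_one])
  have h := hmain.add hrounding
  rwa [mul_one, add_zero] at h

theorem tendsto_recursionFactor (k : ℕ) (t : ℝ) :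
    Tendsto (recursionFactor k t) atTop (𝓝 (Real.exp (-t) * ((k : ℝ) + 1) ^ (k + 1))) := by
  have hratio := (tendsto_natDiv_div_self (k + 1)).inv₀ (by positivity)
  rw [inv_inv, Nat.cast_succ] at hratio
  exact (hratio.pow (k + 1)).const_mul _

theorem limsup_coveringDensity_le {R : ℕ} (hR : 2 ≤ R) {t : ℝ}
    (ht : Real.exp (-t) * (R : ℝ) ^ R < 1) :
    limsup (fun n ↦ coveringDensity n R) atTop ≤
      t * Real.exp 1 / (1 - Real.exp (-t) * (R : ℝ) ^ R) := by
  obtain ⟨k, rfl⟩ : ∃ k, R = k + 1 := Nat.exists_eq_add_of_le' (by lia)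
  rw [Nat.cast_succ] at ht ⊢
  have ht0 : 0 ≤ t := by
    by_contra! hneg
    exact ht.not_ge (one_le_mul_of_one_le_of_one_le (Real.one_le_exp (by linarith))
      (one_le_pow₀ (by simp)))
  calc limsup (fun n ↦ coveringDensity n (k + 1)) atTop
      ≤ t / (1 - ((k : ℝ) + 1)⁻¹) ^ k / (1 - Real.exp (-t) * ((k : ℝ) + 1) ^ (k + 1)) :=
        limsup_le_div_one_sub_of_eventually_le_add_mul_comp (fun n ↦ coveringDensity_nonneg n _)
          ((eventually_gt_atTop 0).mono fun n hn ↦ Nat.div_lt_self hn hR)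
          (Nat.tendsto_div_const_atTop k.succ_ne_zero) (tendsto_recursionConstant k t)
          (tendsto_recursionFactor k t)
          (.of_forall fun n ↦ by unfold recursionFactor; positivity) ht
          (eventually_coveringDensity_le (by lia) ht0)
    _ ≤ t / Real.exp (-1) / (1 - Real.exp (-t) * ((k : ℝ) + 1) ^ (k + 1)) := by
      refine div_le_div_of_nonneg_right ?_ (sub_nonneg.2 ht.le)
      gcongr
      exact exp_neg_one_le_one_sub_inv_pow k
    _ = _ := by rw [Real.exp_neg 1, div_inv_eq_mul]

theorem add_sqrt_div_one_sub_exp_neg_sqrt_le {x : ℝ} (hx : 0 < x) :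
    (x + √(2 * x)) / (1 - Real.exp (-√(2 * x))) ≤ x + √(2 * x) + 1 := by
  set s := √(2 * x)
  have hs0 : 0 < s := Real.sqrt_pos.2 (by positivity)
  have hs2 : s ^ 2 = 2 * x := Real.sq_sqrt (by positivity)
  have hexp : x + s + 1 ≤ Real.exp s := by linarith [Real.quadratic_le_exp_of_nonneg hs0.le]
  have hmul : (x + s + 1) * Real.exp (-s) ≤ 1 := by
    rw [Real.exp_neg]
    exact mul_inv_le_one_of_le₀ hexp (Real.exp_pos s).le
  rw [div_le_iff₀ (by simpa using hs0)]
  linarith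

end Limsup

end DeletionCovering

/-- For fixed `R ≥ 2` and the binary alphabet,
`limsup_n K_D(n,R)·n^R/(2^n·R!) ≤ e(R ln R + √(2R ln R) + 1)`. -/
theorem binary_multiple_deletion_covering_density (R : ℕ) (hR : 2 ≤ R) :
    Filter.limsup (fun n : ℕ =>
        (KDbin n R : ℝ) * (n : ℝ) ^ R / (2 ^ n * (R.factorial : ℝ))) Filter.atTop ≤
      Real.exp 1 * ((R : ℝ) * Real.log R + Real.sqrt (2 * R * Real.log R) + 1) := by
  have hR0 : (0 : ℝ) < R := by positivity
  rw [mul_assoc 2]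
  set L : ℝ := R * Real.log R with hL
  set s : ℝ := √(2 * L)
  have hL0 : 0 < L := mul_pos hR0 (Real.log_pos (by exact_mod_cast hR))
  have hs0 : 0 < s := Real.sqrt_pos.2 (by positivity)
  have hpow : Real.exp (-(L + s)) * (R : ℝ) ^ R = Real.exp (-s) := by
    rw [neg_add, Real.exp_add, hL, ← Real.log_pow, Real.exp_neg, Real.exp_log (by positivity)]
    field_simp
  have hlimsup := DeletionCovering.limsup_coveringDensity_le hR (t := L + s) (by
    rwa [hpow, Real.exp_lt_one_iff, neg_lt_zero])
  rw [hpow, mul_comm, mul_div_assoc] at hlimsup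
  refine hlimsup.trans ?_
  gcongr
  exact DeletionCovering.add_sqrt_div_one_sub_exp_neg_sqrt_le hL0
end
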